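/- Let S be a set equipped with a distinguished element 0 and a binary operation − ("subtraction") satisfying: (i) x − x = 0 for all x ∈ S; (ii) x − 0 = x for all x ∈ S; and (iii) (z − x) − (y − x) = z − y for all x, y, z ∈ S. Then S carries a group structure whose zero element is 0 and whose group subtraction (i.e. a·b^{-1}, written additively a + (−b)) coincides with the given operation −. -/

import Mathlib

/-!
Addition must be `a + b = a - (0 - b)` and negation `-a = 0 - a`. The third axiom says that right
translations preserve differences; subtracting `-b` from both terms of `a - (c - b)` therefore
gives `(a + b) - c = a - (c - b)`. Replacing `c` by `-c` and using `-(b - a) = a - b` yields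
associativity.
-/

/-- The axioms characterizing the subtraction of a not necessarily commutative additive group.
They are stated as a `Prop`-valued mixin, so that `0` and `-` can be arbitrary given data. -/
class IsGroupSubtraction (S : Type*) [Zero S] [Sub S] : Prop where
  protected sub_self (a : S) : a - a = 0
  protected sub_zero (a : S) : a - 0 = a
  protected sub_sub_sub_cancel_right (a b c : S) : a - c - (b - c) = a - b

namespace IsGroupSubtraction

variable {S : Type*} [Zero S] [Sub S] [IsGroupSubtraction S]

theorem zero_sub_sub (a b : S) : 0 - (a - b) = b - a := by
  rw [← IsGroupSubtraction.sub_self b, IsGroupSubtraction.sub_sub_sub_cancel_right]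

theorem zero_sub_zero_sub (a : S) : 0 - (0 - a) = a := by
  rw [zero_sub_sub, IsGroupSubtraction.sub_zero]

theorem sub_sub_zero_sub (a b : S) : a - b - (0 - b) = a := by
  rw [IsGroupSubtraction.sub_sub_sub_cancel_right, IsGroupSubtraction.sub_zero]

theorem sub_zero_sub_sub (a b c : S) : a - (0 - b) - c = a - (c - b) :=
  calc
    a - (0 - b) - c = a - (0 - b) - (c - b - (0 - b)) := by rw [sub_sub_zero_sub]
    _ = a - (c - b) := IsGroupSubtraction.sub_sub_sub_cancel_right _ _ _

theorem sub_zero_sub_assoc (a b c : S) :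
    a - (0 - b) - (0 - c) = a - (0 - (b - (0 - c))) := by
  rw [sub_zero_sub_sub, zero_sub_sub]

variable (S) in
/-- The additive group recovered from its subtraction, with `a + b = a - (0 - b)` and `-a = 0 - a`.
Its `0` and `-` are definitionally the given ones. -/
abbrev toAddGroup : AddGroup S :=
  letI : Add S := ⟨fun a b => a - (0 - b)⟩
  letI : Neg S := ⟨fun a => 0 - a⟩
  { AddGroup.ofLeftAxioms (G := S) sub_zero_sub_assoc zero_sub_zero_sub
      (fun a => IsGroupSubtraction.sub_self (0 - a)) with
    sub := Sub.sub
    sub_eq_add_neg := fun a b => by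
      change a - b = a - (0 - (0 - b))
      rw [zero_sub_zero_sub] }

end IsGroupSubtraction

/-- A pointed set `(S, z)` with a binary operation `sub` satisfying
`x − x = 0`, `x − 0 = x` and `(z − x) − (y − x) = z − y` carries an (additive,
not necessarily commutative) group structure whose zero element is `z` and whose
subtraction `a - b = a + (-b)` coincides with `sub`. -/
theorem group_from_subtraction {S : Type*} (z : S) (sub : S → S → S)
    (h1 : ∀ x, sub x x = z)
    (h2 : ∀ x, sub x z = x)
    (h3 : ∀ x y w, sub (sub w x) (sub y x) = sub w y) :
    ∃ G : AddGroup S,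
      (letI := G; ((0 : S) = z ∧ ∀ a b : S, a - b = sub a b)) := by
  let : Zero S := ⟨z⟩
  let : Sub S := ⟨sub⟩
  have : IsGroupSubtraction S := ⟨h1, h2, fun a b c => h3 c b a⟩
  exact ⟨IsGroupSubtraction.toAddGroup S, rfl, fun _ _ => rfl⟩
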